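/- arXiv:1509.04985 — 2 statements merged into one kernel-verified Lean document; each statement's English description precedes it below -/
import Mathlib

section
/- Let X be a compact Hausdorff totally disconnected (equivalently, zero-dimensional) space. Then f ∈ C(X,X) is a P-point of C_k(X,X) if and only if the range of f is finite and every point of the range of f is a P-point of X. -/
/-!
A P-point of a space is a point whose neighbourhood filter is closed under countable intersections.

Suppose `f` is a P-point and `x₀, x₁, …` have distinct images. The requirements `g xₙ ≠ f xₘ`
(`n ≠ m`) are countably many open conditions satisfied by `f`, so they hold for all `g` near `f`.
But the values `f xₙ` accumulate somewhere, and redefining `f` on a small clopen neighbourhood of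
some `xₙ` as a constant `f xₘ` close to `f xₙ` gives a map near `f` violating them; so the range
is finite. The fibres of `f` are then clopen, and varying the value of `f` on a single fibre embeds
the codomain in the function space, so that each value of `f` inherits the P-point property.

Conversely, a neighbourhood of `f` contains all `g` whose pairs `(f x, g x)` lie in some
neighbourhood of the diagonal. When `f` has finite range, countably many such conditions amount to
finitely many countable families of conditions, one at each point of the range.
-/

/-- A point `p` is a P-point if every countable intersection of open sets containing `p`
is a neighbourhood of `p`. -/
def IsPPoint {Y : Type*} [TopologicalSpace Y] (p : Y) : Prop :=
  ∀ U : ℕ → Set Y, (∀ n, IsOpen (U n) ∧ p ∈ U n) → (⋂ n, U n) ∈ nhds p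

open Filter Function Set Topology TopologicalSpace

theorem isPPoint_iff_countableInterFilter {Y : Type*} [TopologicalSpace Y] {p : Y} :
    IsPPoint p ↔ CountableInterFilter (𝓝 p) := by
  refine ⟨fun hp => ⟨fun S hSc hS => ?_⟩, fun _ U hU =>
    countable_iInter_mem.2 fun n => (hU n).1.mem_nhds (hU n).2⟩
  obtain rfl | hne := S.eq_empty_or_nonempty
  · simp
  obtain ⟨s, rfl⟩ := hSc.exists_eq_range hne
  have hs : ∀ n, s n ∈ 𝓝 p := fun n => hS _ (mem_range_self n)
  rw [sInter_range]
  exact mem_of_superset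
    (hp (fun n => interior (s n)) fun n => ⟨isOpen_interior, mem_interior_iff_mem_nhds.2 (hs n)⟩)
    (iInter_mono fun _ => interior_subset)

theorem IsPPoint.of_isInducing {Y Z : Type*} [TopologicalSpace Y] [TopologicalSpace Z] {i : Y → Z}
    (hi : IsInducing i) {y : Y} (hy : IsPPoint (i y)) : IsPPoint y := by
  rw [isPPoint_iff_countableInterFilter] at hy ⊢
  rw [hi.nhds_eq_comap]
  infer_instance

section FunctionSpace

variable {X Y : Type*} [TopologicalSpace X] [TopologicalSpace Y]

theorem exists_mem_nhdsSet_diagonal_of_mem_nhds [T2Space Y] {f : C(X, Y)} {S : Set C(X, Y)}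
    (hS : S ∈ 𝓝 f) : ∃ E ∈ 𝓝ˢ (diagonal Y), ∀ g : C(X, Y), (∀ x, (f x, g x) ∈ E) → g ∈ S := by
  let graphNhd : Set (Y × Y) → Set C(X, Y) := fun E => {g | ∀ x, (f x, g x) ∈ E}
  have graphNhd_mono : Monotone graphNhd := fun E E' hE g hg x => hE (hg x)
  suffices Tendsto id ((𝓝ˢ (diagonal Y)).lift' graphNhd) (𝓝 f) from
    (mem_lift'_sets graphNhd_mono).1 (this hS)
  rw [ContinuousMap.tendsto_nhds_compactOpen]
  intro K hK O hO hKO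
  let E : Set (Y × Y) := Prod.fst ⁻¹' (f '' K)ᶜ ∪ Prod.snd ⁻¹' O
  have hE_open : IsOpen E :=
    ((hK.image (map_continuous f)).isClosed.isOpen_compl.preimage continuous_fst).union
      (hO.preimage continuous_snd)
  have hE_diag : diagonal Y ⊆ E := by
    rw [diagonal_subset_iff]
    intro y
    by_cases hy : y ∈ f '' K
    · exact .inr (hKO.image_subset hy)
    · exact .inl hy
  filter_upwards [mem_lift' (hE_open.mem_nhdsSet.2 hE_diag)] with g hg x hx
  exact (hg x).resolve_left (not_not_intro (mem_image_of_mem f hx))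

theorem isClopen_preimage_of_finite_range [T1Space Y] {f : C(X, Y)} (hf : (range f).Finite)
    (s : Set Y) : IsClopen (f ⁻¹' s) := by
  have : Finite (range f) := hf
  exact (isClopen_discrete (Subtype.val ⁻¹' s : Set (range f))).preimage
    (map_continuous f).rangeFactorization

theorem eventually_forall_mem_of_finite_range [CompactSpace X] [T1Space Y] {f : C(X, Y)}
    (hf : (range f).Finite) {W : Y → Set Y} (hW : ∀ y ∈ range f, W y ∈ 𝓝 y) :
    ∀ᶠ g : C(X, Y) in 𝓝 f, ∀ x, g x ∈ W (f x) := by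
  have hfibre : ∀ y ∈ range f, ∀ᶠ g : C(X, Y) in 𝓝 f, MapsTo g (f ⁻¹' {y}) (interior (W y)) := by
    intro y hy
    refine ContinuousMap.eventually_mapsTo
      (isClosed_singleton.preimage (map_continuous f)).isCompact isOpen_interior ?_
    rintro x rfl
    exact mem_interior_iff_mem_nhds.2 (hW _ hy)
  filter_upwards [(eventually_all_finite hf).2 hfibre] with g hg x
  exact interior_subset (hg (f x) (mem_range_self x) rfl)

theorem isPPoint_of_finite_range [CompactSpace X] [T2Space Y] {f : C(X, Y)}
    (hf : (range f).Finite) (hP : ∀ y ∈ range f, IsPPoint y) : IsPPoint f := by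
  intro U hU
  choose E hE hEU using fun n =>
    exists_mem_nhdsSet_diagonal_of_mem_nhds ((hU n).1.mem_nhds (hU n).2)
  have hslice : ∀ y ∈ range f, {y' | ∀ n, (y, y') ∈ E n} ∈ 𝓝 y := by
    intro y hy
    have := isPPoint_iff_countableInterFilter.1 (hP y hy)
    refine eventually_countable_forall.2 fun n => ?_
    exact (Continuous.prodMk_right y).continuousAt (mem_nhdsSet_iff_forall.1 (hE n) (y, y) rfl)
  filter_upwards [eventually_forall_mem_of_finite_range hf hslice] with g hg
  exact mem_iInter.2 fun n => hEU n g fun x => hg x n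

open Classical in
/-- The map equal to the constant `y` on the clopen set `C` and to `f` elsewhere. Such maps serve
both to perturb `f` locally and, with `y` varying, to embed `Y` in `C(X, Y)`. -/
noncomputable def overwriteOn {C : Set X} (hC : IsClopen C) (f : C(X, Y)) (y : Y) : C(X, Y) where
  toFun := C.piecewise (fun _ => y) f
  continuous_toFun := continuous_const.piecewise (by simp [hC.frontier_eq]) (map_continuous f)

section overwriteOn

variable {C : Set X} (hC : IsClopen C) (f : C(X, Y)) (y : Y) {x : X}

theorem overwriteOn_apply_of_mem (hx : x ∈ C) : overwriteOn hC f y x = y :=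
  if_pos hx

theorem overwriteOn_apply_of_notMem (hx : x ∉ C) : overwriteOn hC f y x = f x :=
  if_neg hx

theorem continuous_overwriteOn : Continuous (overwriteOn hC f) := by
  classical
  have hC' : IsClopen (Prod.snd ⁻¹' C : Set (Y × X)) := hC.preimage continuous_snd
  exact ContinuousMap.continuous_of_continuous_uncurry _ <|
    continuous_fst.piecewise (s := Prod.snd ⁻¹' C) (by simp [hC'.frontier_eq])
      ((map_continuous f).comp continuous_snd)

theorem isInducing_overwriteOn (hne : C.Nonempty) : IsInducing (overwriteOn hC f) := by
  obtain ⟨x, hx⟩ := hne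
  have hleft : LeftInverse (fun g : C(X, Y) => g x) (overwriteOn hC f) :=
    fun y => overwriteOn_apply_of_mem hC f y hx
  exact (hleft.isEmbedding (continuous_eval_const x) (continuous_overwriteOn hC f)).isInducing

theorem overwriteOn_eq_self {f : C(X, Y)} {y : Y} (hf : ∀ x ∈ C, f x = y) :
    overwriteOn hC f y = f := by
  ext x
  by_cases hx : x ∈ C
  · rw [overwriteOn_apply_of_mem hC f y hx, hf x hx]
  · exact overwriteOn_apply_of_notMem hC f y hx

end overwriteOn

theorem exists_isOpen_forall_overwriteOn_mem [T2Space Y] {f : C(X, Y)} {S : Set C(X, Y)}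
    (hS : S ∈ 𝓝 f) (z : Y) : ∃ W : Set Y, IsOpen W ∧ z ∈ W ∧
      ∀ (C : Set X) (hC : IsClopen C), MapsTo f C W → ∀ y ∈ W, overwriteOn hC f y ∈ S := by
  obtain ⟨E, hE, hES⟩ := exists_mem_nhdsSet_diagonal_of_mem_nhds hS
  have hE_nhds : ∀ y, E ∈ 𝓝 (y, y) := fun y => mem_nhdsSet_iff_forall.1 hE (y, y) rfl
  obtain ⟨W, hW, hzW, hWE⟩ := exists_nhds_square (hE_nhds z)
  refine ⟨W, hW, hzW, fun C hC hfC y hy => hES _ fun x => ?_⟩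
  by_cases hx : x ∈ C
  · rw [overwriteOn_apply_of_mem hC f y hx]
    exact hWE ⟨hfC hx, hy⟩
  · rw [overwriteOn_apply_of_notMem hC f y hx]
    exact mem_of_mem_nhds (hE_nhds (f x))

theorem IsPPoint.apply_of_finite_range [T1Space Y] {f : C(X, Y)} (hf : IsPPoint f)
    (hfin : (range f).Finite) (x : X) : IsPPoint (f x) := by
  have hC : IsClopen (f ⁻¹' {f x}) := isClopen_preimage_of_finite_range hfin {f x}
  refine .of_isInducing (isInducing_overwriteOn hC f ⟨x, rfl⟩) ?_
  rwa [overwriteOn_eq_self hC fun _ ha => ha]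

theorem IsPPoint.eventually_apply_ne [T1Space Y] {f : C(X, Y)} (hf : IsPPoint f) {x : ℕ → X}
    (hx : Injective (f ∘ x)) : ∀ᶠ g in 𝓝 f, ∀ n m, n ≠ m → g (x n) ≠ f (x m) := by
  have := isPPoint_iff_countableInterFilter.1 hf
  simp only [eventually_countable_forall]
  exact fun n m hnm => (continuous_eval_const (x n)).continuousAt.eventually_ne (hx.ne hnm)

theorem IsPPoint.finite_range [CompactSpace X] [T2Space Y]
    (hX : IsTopologicalBasis {C : Set X | IsClopen C}) {f : C(X, Y)} (hf : IsPPoint f) :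
    (range f).Finite := by
  by_contra hinf
  obtain ⟨x, hx⟩ : ∃ x : ℕ → X, Injective (f ∘ x) := by
    have : Infinite (range f) := infinite_coe_iff.2 hinf
    refine ⟨fun n => rangeSplitting f (Infinite.natEmbedding _ n), fun n m hnm => ?_⟩
    simpa only [comp_apply, apply_rangeSplitting, Subtype.coe_inj, EmbeddingLike.apply_eq_iff_eq]
      using hnm
  obtain ⟨a, ha⟩ : ∃ a, MapClusterPt a atTop x := exists_clusterPt_of_compactSpace _
  obtain ⟨W, hW, haW, hWf⟩ :=
    exists_isOpen_forall_overwriteOn_mem (hf.eventually_apply_ne hx) (f a)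
  have hfreq : ∃ᶠ n in atTop, f (x n) ∈ W :=
    ha.frequently ((map_continuous f).continuousAt (hW.mem_nhds haW))
  obtain ⟨n, hn⟩ := hfreq.exists
  obtain ⟨m, hnm, hm⟩ := frequently_atTop'.1 hfreq n
  obtain ⟨C, hC, hnC, hCW⟩ := hX.exists_subset_of_mem_open hn (hW.preimage (map_continuous f))
  exact hWf C hC hCW _ hm n m hnm.ne (overwriteOn_apply_of_mem hC f _ hnC)

end FunctionSpace

theorem isPPoint_iff_finite_range_of_pPoints_general {X Y : Type*} [TopologicalSpace X]
    [CompactSpace X] [TopologicalSpace Y] [T2Space Y]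
    (hX : IsTopologicalBasis {C : Set X | IsClopen C}) (f : C(X, Y)) :
    IsPPoint f ↔ (range f).Finite ∧ ∀ y ∈ range f, IsPPoint y := by
  refine ⟨fun hf => ?_, fun ⟨hfin, hP⟩ => isPPoint_of_finite_range hfin hP⟩
  have hfin := hf.finite_range hX
  exact ⟨hfin, forall_mem_range.2 (hf.apply_of_finite_range hfin)⟩

/-- For a compact Hausdorff zero-dimensional (totally disconnected) space `X`, a map
`f ∈ C(X, X)` is a P-point of `C_k(X, X)` iff its range is finite and consists of P-points
of `X`. -/
theorem isPPoint_iff_finite_range_of_pPoints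
    (X : Type*) [TopologicalSpace X] [CompactSpace X] [T2Space X]
    [TotallyDisconnectedSpace X] (f : C(X, X)) :
    IsPPoint f ↔ (Set.range f).Finite ∧ ∀ y ∈ Set.range f, IsPPoint y :=
  isPPoint_iff_finite_range_of_pPoints_general isTopologicalBasis_isClopen f
end

section
/- Let X be a compact Hausdorff F-space that is nowhere c.c.c. Then every f ∈ C(X,X) that is an open map and has finite fibers (the preimage of every point is finite) is a weak P-point of C_k(X,X). -/
/-- A cozero-set of a topological space. -/
def IsCozero {Y : Type*} [TopologicalSpace Y] (s : Set Y) : Prop :=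
  ∃ g : Y → ℝ, Continuous g ∧ s = {y | g y ≠ 0}

/-- Two sets are completely separated if some continuous real-valued function is `0` on the
first and `1` on the second. -/
def CompletelySeparated {Y : Type*} [TopologicalSpace Y] (A B : Set Y) : Prop :=
  ∃ h : Y → ℝ, Continuous h ∧ (∀ a ∈ A, h a = 0) ∧ (∀ b ∈ B, h b = 1)

/-- A space is an F-space if any two disjoint cozero-sets are completely separated. -/
def IsFSpace (Y : Type*) [TopologicalSpace Y] : Prop :=
  ∀ A B : Set Y, IsCozero A → IsCozero B → A ∩ B = ∅ → CompletelySeparated A B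

/-- A space is nowhere c.c.c. if every nonempty open set contains an uncountable pairwise
disjoint family of nonempty open sets. -/
def NowhereCCC (Y : Type*) [TopologicalSpace Y] : Prop :=
  ∀ U : Set Y, IsOpen U → U.Nonempty →
    ∃ 𝒱 : Set (Set Y), ¬𝒱.Countable ∧ (∀ V ∈ 𝒱, IsOpen V ∧ V.Nonempty ∧ V ⊆ U) ∧
      𝒱.Pairwise Disjoint

/-- A point `p` is a weak P-point if it is not in the closure of any countable set avoiding
`p`. -/
def IsWeakPPoint {Y : Type*} [TopologicalSpace Y] (p : Y) : Prop :=
  ∀ S : Set Y, S.Countable → p ∉ S → p ∉ closure S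

/-!
Let `F n ≠ f` enumerate the countable set. We look for points `x n` and finitely many functions
`h : C(Y, ℝ)` such that every `n` has an `h` with `h (f (x n)) = 0` and `h (F n (x n)) = 1`; then
`g ↦ h ∘ g` keeps each `F n` away from `f`.

The points `f (x n)` are placed in pairwise disjoint cozero-sets `T n`. Since disjoint cozero-sets
of an F-space have disjoint closures, a point adheres to countable unions of a pairwise disjoint
family of cozero-sets only through countably many of its members. With uncountably many candidates
for each `T n`, one can therefore ensure that `z n = F n (x n)` does not adhere to `⋃ m ≥ n, T m`.
It may still adhere to `T m` for one `m < n`; joining `n` to that `m` gives a forest, and a proper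
two-colouring of it separates, within each colour, the points `z n` from the union of the `T n`.
-/

open Function Set Topology

universe u v

section WellFounded

variable {α : Type u} {r : α → α → Prop}

theorem exists_forall_of_wellFounded {β : α → Type v} (hr : WellFounded r)
    {P : ∀ a, (∀ b, r b a → β b) → β a → Prop} (hP : ∀ a f, ∃ y, P a f y) :
    ∃ f : ∀ a, β a, ∀ a, P a (fun b _ ↦ f b) (f a) := by
  choose next hnext using hP
  refine ⟨hr.fix next, fun a ↦ ?_⟩
  rw [hr.fix_eq]
  exact hnext a _

theorem exists_bool_coloring (hr : WellFounded r) (huniq : Relator.LeftUnique r) :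
    ∃ c : α → Bool, ∀ ⦃a b⦄, r b a → c a ≠ c b := by
  refine exists_forall_of_wellFounded (β := fun _ ↦ Bool) hr
    (P := fun a c i ↦ ∀ ⦃b⦄ (h : r b a), i ≠ c b h) fun a c ↦ ?_
  by_cases h : ∃ b, r b a
  · obtain ⟨b, hb⟩ := h
    refine ⟨!c b hb, fun b' hb' ↦ ?_⟩
    obtain rfl := huniq hb hb'
    exact Bool.not_ne_self _
  · exact ⟨true, fun b hb ↦ absurd ⟨b, hb⟩ h⟩

end WellFounded

theorem exists_forall_lt_notMem_of_countable {ι : ℕ → Type u} [∀ n, Uncountable (ι n)]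
    {A : (Σ n, ι n) → Set (Σ n, ι n)} (hA : ∀ a, (A a).Countable) :
    ∃ j : ∀ n, ι n, ∀ ⦃m n⦄, m < n → ⟨n, j n⟩ ∉ A ⟨m, j m⟩ := by
  suffices ∃ j : ∀ n, ι n, ∀ n m, m < n → ⟨n, j n⟩ ∉ A ⟨m, j m⟩ from
    this.imp fun j hj m n ↦ hj n m
  refine exists_forall_of_wellFounded (r := (· < ·)) wellFounded_lt
    (P := fun n j i ↦ ∀ m (h : m < n), ⟨n, i⟩ ∉ A ⟨m, j m h⟩) fun n j ↦ ?_
  have hcount : (⋃ m : Iio n, Sigma.mk n ⁻¹' A ⟨m, j m m.2⟩).Countable :=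
    countable_iUnion fun m ↦ (hA _).preimage sigma_mk_injective
  obtain ⟨i, hi⟩ : ∃ i, i ∉ ⋃ m : Iio n, Sigma.mk n ⁻¹' A ⟨m, j m m.2⟩ := by
    by_contra! hall
    exact not_countable_univ (hcount.mono fun i _ ↦ hall i)
  exact ⟨i, fun m hm him ↦ hi (mem_iUnion.mpr ⟨⟨m, hm⟩, him⟩)⟩

variable {X : Type u} {Y : Type v} [TopologicalSpace X] [TopologicalSpace Y]

theorem CompletelySeparated.mono {A A' B B' : Set Y} (h : CompletelySeparated A' B')
    (hA : A ⊆ A') (hB : B ⊆ B') : CompletelySeparated A B :=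
  let ⟨g, hg, h0, h1⟩ := h
  ⟨g, hg, fun a ha ↦ h0 a (hA ha), fun b hb ↦ h1 b (hB hb)⟩

theorem CompletelySeparated.disjoint_closure {A B : Set Y} (h : CompletelySeparated A B) :
    Disjoint (closure A) (closure B) := by
  obtain ⟨g, hg, h0, h1⟩ := h
  refine Disjoint.mono (closure_minimal h0 (isClosed_singleton.preimage hg))
    (closure_minimal h1 (isClosed_singleton.preimage hg)) ?_
  exact (disjoint_singleton.mpr zero_ne_one).preimage g

theorem isCozero_iUnion {ι : Type u} [Countable ι] {s : ι → Set Y} (hs : ∀ i, IsCozero (s i)) :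
    IsCozero (⋃ i, s i) := by
  choose g hg hsg using hs
  obtain ⟨w, hw, _, hsum, -⟩ := NNReal.exists_pos_sum_of_countable one_ne_zero ι
  replace hsum : Summable fun i ↦ (w i : ℝ) := NNReal.summable_coe.mpr hsum.summable
  have hnonneg (y : Y) (i : ι) : 0 ≤ w i * min 1 |g i y| := by positivity
  have hle (y : Y) (i : ι) : w i * min 1 |g i y| ≤ w i :=
    mul_le_of_le_one_right (w i).2 (min_le_left _ _)
  have hsummable (y : Y) : Summable fun i ↦ w i * min 1 |g i y| :=
    hsum.of_nonneg_of_le (hnonneg y) (hle y)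
  refine ⟨fun y ↦ ∑' i, w i * min 1 |g i y|, ?_, ?_⟩
  · refine continuous_tsum (fun i ↦ by have := hg i; fun_prop) hsum fun i y ↦ ?_
    rw [Real.norm_of_nonneg (hnonneg y i)]
    exact hle y i
  · ext y
    have hzero : ∑' i, w i * min 1 |g i y| = 0 ↔ ∀ i, g i y = 0 := by
      rw [← (hsummable y).hasSum_iff, hasSum_zero_iff_of_nonneg (hnonneg y), funext_iff]
      refine forall_congr' fun i ↦ ⟨fun h ↦ ?_, fun h ↦ by simp [h]⟩
      by_contra hgi
      have : 0 < min 1 |g i y| := lt_min one_pos (abs_pos.mpr hgi)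
      exact (mul_pos (NNReal.coe_pos.mpr (hw i)) this).ne' h
    simp only [hsg, mem_iUnion, mem_ofPred_eq, ne_eq, hzero, not_forall]

theorem isCozero_biUnion {ι : Type u} {I : Set ι} (hI : I.Countable) {s : ι → Set Y}
    (hs : ∀ i ∈ I, IsCozero (s i)) : IsCozero (⋃ i ∈ I, s i) := by
  have := hI.to_subtype
  rw [biUnion_eq_iUnion]
  exact isCozero_iUnion fun i ↦ hs i i.2

theorem exists_isCozero_mem_subset [CompletelyRegularSpace Y] {U : Set Y} (hU : IsOpen U) {y : Y}
    (hy : y ∈ U) : ∃ V, IsCozero V ∧ y ∈ V ∧ V ⊆ U := by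
  obtain ⟨g, hg, hgy, hgU⟩ := CompletelyRegularSpace.completely_regular_isOpen y U hU hy
  refine ⟨{z | 1 - (g z : ℝ) ≠ 0}, ⟨_, by fun_prop, rfl⟩, by simp [hgy], fun z hz ↦ ?_⟩
  by_contra hzU
  exact hz (by simp [hgU hzU])

namespace IsFSpace

variable {ι : Type u}

theorem disjoint_closure (hF : IsFSpace Y) {A B : Set Y} (hA : IsCozero A) (hB : IsCozero B)
    (h : Disjoint A B) : Disjoint (closure A) (closure B) :=
  (hF A B hA hB h.inter_eq).disjoint_closure

theorem completelySeparated_of_countable [CompletelyRegularSpace Y] (hF : IsFSpace Y)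
    {A D : Set Y} (hA : IsCozero A) (hD : D.Countable) (h : Disjoint (closure A) D) :
    CompletelySeparated A D := by
  have hnhds (d : D) : ∃ W, IsCozero W ∧ ↑d ∈ W ∧ W ⊆ (closure A)ᶜ :=
    exists_isCozero_mem_subset isClosed_closure.isOpen_compl (h.notMem_of_mem_right d.2)
  choose W hW hdW hWA using hnhds
  have := hD.to_subtype
  have hAW : Disjoint A (⋃ d, W d) := by
    rw [disjoint_iUnion_right]
    exact fun d ↦ disjoint_compl_right.mono subset_closure (hWA d)
  exact (hF A _ hA (isCozero_iUnion hW) hAW.inter_eq).mono Subset.rfl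
    fun d hd ↦ mem_iUnion.mpr ⟨⟨d, hd⟩, hdW _⟩

theorem exists_countable_forall_notMem_closure (hF : IsFSpace Y) {V : ι → Set Y}
    (hV : ∀ i, IsCozero (V i)) (hdisj : Pairwise (Disjoint on V)) (z : Y) :
    ∃ A : Set ι, A.Countable ∧
      ∀ B : Set ι, B.Countable → Disjoint A B → z ∉ closure (⋃ i ∈ B, V i) := by
  by_cases h : ∃ A : Set ι, A.Countable ∧ z ∈ closure (⋃ i ∈ A, V i)
  · obtain ⟨A, hA, hzA⟩ := h
    refine ⟨A, hA, fun B hB hAB ↦ Disjoint.notMem_of_mem_left ?_ hzA⟩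
    refine hF.disjoint_closure (isCozero_biUnion hA fun i _ ↦ hV i)
      (isCozero_biUnion hB fun i _ ↦ hV i) ?_
    simp only [disjoint_iUnion_left, disjoint_iUnion_right]
    exact fun b hb a ha ↦ hdisj (hAB.ne_of_mem ha hb)
  · push Not at h
    exact ⟨∅, countable_empty, fun B hB _ ↦ h B hB⟩

theorem exists_forall_notMem_closure_biUnion_Ioi (hF : IsFSpace Y) {ι : ℕ → Type u}
    [∀ n, Uncountable (ι n)] {V : (Σ n, ι n) → Set Y} (hV : ∀ a, IsCozero (V a))
    (hdisj : Pairwise (Disjoint on V)) (z : (Σ n, ι n) → Y) :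
    ∃ j : ∀ n, ι n, ∀ n, z ⟨n, j n⟩ ∉ closure (⋃ m ∈ Ioi n, V ⟨m, j m⟩) := by
  choose A hA hzA using fun a ↦ hF.exists_countable_forall_notMem_closure hV hdisj (z a)
  obtain ⟨j, hj⟩ := exists_forall_lt_notMem_of_countable hA
  refine ⟨j, fun n ↦ ?_⟩
  have hcount : ((fun m ↦ (⟨m, j m⟩ : Σ n, ι n)) '' Ioi n).Countable := (to_countable _).image _
  have hdisjA : Disjoint (A ⟨n, j n⟩) ((fun m ↦ ⟨m, j m⟩) '' Ioi n) := by
    rw [disjoint_right, forall_mem_image]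
    exact fun m hm ↦ hj hm
  simpa only [biUnion_image] using hzA _ _ hcount hdisjA

theorem exists_bool_coloring_completelySeparated [CompletelyRegularSpace Y] (hF : IsFSpace Y)
    {T : ℕ → Set Y} (hT : ∀ n, IsCozero (T n)) (hdisj : Pairwise (Disjoint on T)) {z : ℕ → Y}
    (hself : ∀ n, z n ∉ closure (T n)) (hlater : ∀ n, z n ∉ closure (⋃ m ∈ Ioi n, T m)) :
    ∃ c : ℕ → Bool, ∀ i, CompletelySeparated (⋃ n ∈ c ⁻¹' {i}, T n) (z '' (c ⁻¹' {i})) := by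
  let r (m n : ℕ) : Prop := m < n ∧ z n ∈ closure (T m)
  have hr : WellFounded r := Subrelation.wf (fun h ↦ h.1) wellFounded_lt
  have huniq : Relator.LeftUnique r := fun m m' n hm hm' ↦ by
    by_contra hne
    exact (hF.disjoint_closure (hT m) (hT m') (hdisj hne)).notMem_of_mem_left hm.2 hm'.2
  obtain ⟨c, hc⟩ := exists_bool_coloring hr huniq
  refine ⟨c, fun i ↦ hF.completelySeparated_of_countable
    (isCozero_biUnion (to_countable _) fun n _ ↦ hT n) ((to_countable _).image z) ?_⟩
  rw [disjoint_right, forall_mem_image]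
  rintro n rfl hn
  have hsub : ⋃ m ∈ c ⁻¹' {c n}, T m ⊆
      (⋃ m ∈ Iio n ∩ c ⁻¹' {c n}, T m) ∪ (T n ∪ ⋃ m ∈ Ioi n, T m) := by
    refine iUnion₂_subset fun m hm ↦ ?_
    rcases lt_trichotomy m n with h | rfl | h
    · have hmem : m ∈ Iio n ∩ c ⁻¹' {c n} := ⟨h, hm⟩
      exact (subset_biUnion_of_mem (u := T) hmem).trans subset_union_left
    · exact subset_union_left.trans subset_union_right
    · exact (subset_biUnion_of_mem (u := T) h).trans
        (subset_union_right.trans subset_union_right)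
  replace hn := closure_mono hsub hn
  rw [closure_union, closure_union, ((finite_Iio n).inter_of_left _).closure_biUnion] at hn
  rcases hn with hearlier | hn | hn
  · obtain ⟨m, ⟨hmn, hcm⟩, hm⟩ := mem_iUnion₂.mp hearlier
    exact hc ⟨hmn, hm⟩ hcm.symm
  · exact hself n hn
  · exact hlater n hn

end IsFSpace

theorem not_subset_closure_of_disjoint_of_subset_closure {U V W : Set Y} (hVW : Disjoint V W)
    (hU : IsOpen U) (hne : U.Nonempty) (hW : IsOpen W) (hV : U ⊆ closure V) :
    ¬U ⊆ closure W := fun hUW ↦ by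
  have hUW' : Disjoint U W := (hVW.closure_left hW).mono_left hV
  exact hne.ne_empty (disjoint_self.mp ((hUW'.closure_right hU).mono_right hUW))

namespace NowhereCCC

theorem exists_isOpen_forall_not_subset_closure (hccc : NowhereCCC Y) {ι : Type u} [Countable ι]
    {U : Set Y} (hU : IsOpen U) (hUne : U.Nonempty) {O : ι → Set Y} (hO : ∀ i, IsOpen (O i))
    (hOne : ∀ i, (O i).Nonempty) :
    ∃ P ⊆ U, IsOpen P ∧ P.Nonempty ∧ ∀ i, ¬O i ⊆ closure P := by
  obtain ⟨𝒱, huncount, h𝒱, hdisj⟩ := hccc U hU hUne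
  by_contra! hdense
  choose k hk using fun V : 𝒱 ↦
    hdense V (h𝒱 V V.2).2.2 (h𝒱 V V.2).1 (h𝒱 V V.2).2.1
  have hkinj : Injective k := fun V W hVW ↦ by
    by_contra hne
    exact not_subset_closure_of_disjoint_of_subset_closure
      (hdisj V.2 W.2 (Subtype.coe_injective.ne hne)) (hO (k V)) (hOne _) (h𝒱 W W.2).1 (hk V)
      (hVW ▸ hk W)
  exact huncount (countable_coe_iff.mp hkinj.countable)

theorem exists_disjoint_isOpen_refinement (hccc : NowhereCCC Y) {O : ℕ → Set Y}
    (hO : ∀ n, IsOpen (O n)) (hne : ∀ n, (O n).Nonempty) :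
    ∃ P : ℕ → Set Y, (∀ n, IsOpen (P n) ∧ (P n).Nonempty ∧ P n ⊆ O n) ∧
      Pairwise (Disjoint on P) := by
  -- `G` is the union of the sets chosen so far; it must not become dense in any `O m`.
  have hnext (n : ℕ) (G : {G : Set Y // ∀ m, ¬O m ⊆ closure G}) : ∃ P ⊆ O n \ closure G.1,
      IsOpen P ∧ P.Nonempty ∧ ∀ m, ¬O m ⊆ closure (G.1 ∪ P) := by
    have hopen (m : ℕ) : IsOpen (O m \ closure G.1) := (hO m).sdiff isClosed_closure
    have hnonempty (m : ℕ) : (O m \ closure G.1).Nonempty := sdiff_nonempty.mpr (G.2 m)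
    obtain ⟨P, hPO, hP, hPne, hPdense⟩ := hccc.exists_isOpen_forall_not_subset_closure
      (hopen n) (hnonempty n) hopen hnonempty
    refine ⟨P, hPO, hP, hPne, fun m ↦ ?_⟩
    rw [closure_union, ← sdiff_subset_iff]
    exact hPdense m
  choose P hPO hP hPne hPdense using hnext
  let G (n : ℕ) : {G : Set Y // ∀ m, ¬O m ⊆ closure G} :=
    n.rec ⟨∅, by simpa [← nonempty_iff_ne_empty] using hne⟩
      fun n G ↦ ⟨G.1 ∪ P n G, hPdense n G⟩
  have hG : Monotone fun n ↦ (G n).1 := monotone_nat_of_le_succ fun n ↦ subset_union_left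
  refine ⟨fun n ↦ P n (G n), fun n ↦ ⟨hP _ _, hPne _ _, (hPO _ _).trans sdiff_subset⟩, ?_⟩
  rw [pairwise_disjoint_on]
  intro m n hmn
  have hPG : P m (G m) ⊆ closure (G n).1 :=
    (subset_union_right.trans (hG (Nat.succ_le_of_lt hmn))).trans subset_closure
  exact disjoint_sdiff_right.mono hPG (hPO n (G n))

theorem exists_uncountable_isCozero_refinement [CompletelyRegularSpace Y] (hccc : NowhereCCC Y)
    {O : ℕ → Set Y} (hO : ∀ n, IsOpen (O n)) (hne : ∀ n, (O n).Nonempty) :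
    ∃ (ι : ℕ → Type v) (V : (Σ n, ι n) → Set Y), (∀ n, Uncountable (ι n)) ∧
      (∀ a, IsCozero (V a) ∧ (V a).Nonempty ∧ V a ⊆ O a.1) ∧ Pairwise (Disjoint on V) := by
  obtain ⟨P, hP, hPdisj⟩ := hccc.exists_disjoint_isOpen_refinement hO hne
  choose 𝒱 huncount h𝒱 hdisj using fun n ↦ hccc (P n) (hP n).1 (hP n).2.1
  have hcozero (a : Σ n, 𝒱 n) : ∃ V, IsCozero V ∧ V.Nonempty ∧ V ⊆ (a.2 : Set Y) := by
    obtain ⟨hopen, ⟨y, hy⟩, -⟩ := h𝒱 a.1 a.2 a.2.2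
    obtain ⟨V, hV, hyV, hVa⟩ := exists_isCozero_mem_subset hopen hy
    exact ⟨V, hV, ⟨y, hyV⟩, hVa⟩
  choose V hV hVne hVsub using hcozero
  have hVP (a : Σ n, 𝒱 n) : V a ⊆ P a.1 := (hVsub a).trans (h𝒱 a.1 a.2 a.2.2).2.2
  refine ⟨fun n ↦ 𝒱 n, V, fun n ↦ not_countable_iff.mp (huncount n),
    fun a ↦ ⟨hV a, hVne a, (hVP a).trans (hP a.1).2.2⟩, ?_⟩
  rintro ⟨m, A⟩ ⟨n, B⟩ hne
  obtain rfl | hmn := eq_or_ne m n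
  · have hAB : A.1 ≠ B.1 := fun h ↦ hne (by rw [Subtype.ext h])
    exact (hdisj m A.2 B.2 hAB).mono (hVsub _) (hVsub _)
  · exact (hPdisj hmn).mono (hVP _) (hVP _)

end NowhereCCC

theorem exists_isOpen_forall_notMem_closure_image [T2Space Y] {f g : X → Y} (hf : Continuous f)
    (hg : Continuous g) (hne : g ≠ f) :
    ∃ U, IsOpen U ∧ U.Nonempty ∧ ∀ x ∈ U, g x ∉ closure (f '' U) := by
  obtain ⟨x, hx⟩ := ne_iff.mp hne
  obtain ⟨A, B, hA, hB, hxA, hxB, hAB⟩ := t2_separation hx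
  refine ⟨g ⁻¹' A ∩ f ⁻¹' B, (hA.preimage hg).inter (hB.preimage hf), ⟨x, hxA, hxB⟩,
    fun y hy ↦ ?_⟩
  have himage : f '' (g ⁻¹' A ∩ f ⁻¹' B) ⊆ B := image_subset_iff.mpr inter_subset_right
  exact ((hAB.closure_right hA).mono_right (closure_mono himage)).notMem_of_mem_left hy.1

theorem notMem_closure_image_of_completelySeparated [CompactSpace X] {ι : Type*} {A : Set ι}
    {f : C(X, Y)} {F : ι → C(X, Y)} {x : ι → X}
    (h : CompletelySeparated ((fun i ↦ f (x i)) '' A) ((fun i ↦ F i (x i)) '' A)) :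
    f ∉ closure (F '' A) := by
  obtain ⟨h, hcont, h0, h1⟩ := h
  let φ (g : C(X, Y)) : C(X, ℝ) := (⟨h, hcont⟩ : C(Y, ℝ)).comp g
  have hφ : Continuous φ := ContinuousMap.continuous_postcomp _
  have hnhds : φ ⁻¹' Metric.ball (φ f) 1 ∈ 𝓝 f :=
    hφ.continuousAt.preimage_mem_nhds (Metric.ball_mem_nhds _ one_pos)
  intro hf
  obtain ⟨_, hi, i, hiA, rfl⟩ := mem_closure_iff_nhds.mp hf _ hnhds
  have hdist : dist (h (F i (x i))) (h (f (x i))) < 1 :=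
    (ContinuousMap.dist_apply_le_dist (x i)).trans_lt hi
  rw [h0 _ (mem_image_of_mem _ hiA), h1 _ (mem_image_of_mem _ hiA)] at hdist
  norm_num at hdist

theorem exists_bool_coloring_completelySeparated_apply [T35Space Y] (hF : IsFSpace Y)
    (hccc : NowhereCCC Y) {f : C(X, Y)}
    (hf : ∀ U, IsOpen U → U.Nonempty → (interior (f '' U)).Nonempty) {F : ℕ → C(X, Y)}
    (hne : ∀ n, F n ≠ f) :
    ∃ (x : ℕ → X) (c : ℕ → Bool), ∀ i, CompletelySeparated
      ((fun n ↦ f (x n)) '' (c ⁻¹' {i})) ((fun n ↦ F n (x n)) '' (c ⁻¹' {i})) := by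
  choose U hU hUne hUsep using fun n ↦ exists_isOpen_forall_notMem_closure_image f.continuous
    (F n).continuous (DFunLike.coe_injective.ne (hne n))
  obtain ⟨ι, V, _, hV, hdisj⟩ := hccc.exists_uncountable_isCozero_refinement
    (fun n ↦ isOpen_interior) fun n ↦ hf (U n) (hU n) (hUne n)
  have hVU (a : Σ n, ι n) : V a ⊆ f '' U a.1 := (hV a).2.2.trans interior_subset
  have hpoint (a : Σ n, ι n) : ∃ x ∈ U a.1, f x ∈ V a := by
    obtain ⟨y, hy⟩ := (hV a).2.1
    obtain ⟨x, hx, rfl⟩ := hVU a hy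
    exact ⟨x, hx, hy⟩
  choose p hpU hpV using hpoint
  obtain ⟨j, hlater⟩ := hF.exists_forall_notMem_closure_biUnion_Ioi (fun a ↦ (hV a).1) hdisj
    fun a ↦ F a.1 (p a)
  let a (n : ℕ) : Σ n, ι n := ⟨n, j n⟩
  have ha : Injective a := fun m n h ↦ congrArg Sigma.fst h
  have hself (n : ℕ) : F n (p (a n)) ∉ closure (V (a n)) := fun h ↦
    hUsep n _ (hpU (a n)) (closure_mono (hVU (a n)) h)
  obtain ⟨c, hc⟩ := hF.exists_bool_coloring_completelySeparated (fun n ↦ (hV (a n)).1)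
    (hdisj.comp_of_injective ha) hself hlater
  refine ⟨p ∘ a, c, fun i ↦ (hc i).mono ?_ Subset.rfl⟩
  exact image_subset_iff.mpr fun n hn ↦ mem_biUnion hn (hpV (a n))

theorem open_finiteToOne_isWeakPPoint_general [CompactSpace X] [T35Space Y] (hF : IsFSpace Y)
    (hccc : NowhereCCC Y) (f : C(X, Y))
    (hf : ∀ U, IsOpen U → U.Nonempty → (interior (f '' U)).Nonempty) :
    IsWeakPPoint f := by
  intro S hS hfS
  obtain rfl | hSne := S.eq_empty_or_nonempty
  · simp
  obtain ⟨F, rfl⟩ := hS.exists_eq_range hSne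
  obtain ⟨x, c, hc⟩ := exists_bool_coloring_completelySeparated_apply hF hccc hf
    fun n hn ↦ hfS ⟨n, hn⟩
  have hrange : range F = ⋃ i, F '' (c ⁻¹' {i}) := by
    rw [← image_iUnion, ← preimage_iUnion, iUnion_of_singleton, preimage_univ, image_univ]
  rw [hrange, closure_iUnion_of_finite, mem_iUnion, not_exists]
  exact fun i ↦ notMem_closure_image_of_completelySeparated (hc i)

/-- In a compact Hausdorff, nowhere c.c.c. F-space `X`, every open finite-to-one map
`f ∈ C(X, X)` is a weak P-point of `C_k(X, X)`. -/
theorem open_finiteToOne_isWeakPPoint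
    (X : Type*) [TopologicalSpace X] [CompactSpace X] [T2Space X]
    (hF : IsFSpace X) (hccc : NowhereCCC X)
    (f : C(X, X)) (hopen : IsOpenMap f) (hfib : ∀ y : X, ((f : X → X) ⁻¹' {y}).Finite) :
    IsWeakPPoint f :=
  open_finiteToOne_isWeakPPoint_general hF hccc f fun U hU hne ↦
    (hopen U hU).interior_eq.symm ▸ hne.image f
end
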